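/- Let (A, 𝔪, k) be a commutative Noetherian local ring and let M be a finitely generated A-module having free reducible complexity. Then pd_A M = sup { i | Ext^i_A(M,M) ≠ 0 }. In particular, if M has infinite projective dimension then Ext^i_A(M,M) ≠ 0 for infinitely many i. -/

import Mathlib

open CategoryTheory Opposite Filter IsLocalRing

universe u

namespace ComplexityTest

variable (A : Type u) [CommRing A] [IsLocalRing A]

structure MinFreeRes (M : Type u) [AddCommGroup M] [Module A M] : Type u where
  b : ℕ → ℕ
  d : (n : ℕ) → ((Fin (b (n + 1)) → A) →ₗ[A] (Fin (b n) → A))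
  aug : (Fin (b 0) → A) →ₗ[A] M
  aug_surjective : Function.Surjective aug
  exact_zero : Function.Exact (d 0) aug
  exact_succ : ∀ n, Function.Exact (d (n + 1)) (d n)
  minimal : ∀ n x i, d n x i ∈ maximalIdeal A

variable (M : Type u) [AddCommGroup M] [Module A M]

def HasComplexityLE (t : ℕ) : Prop :=
  ∃ (R : MinFreeRes A M) (a : ℝ), ∀ᶠ n : ℕ in atTop, (R.b n : ℝ) ≤ a * (n : ℝ) ^ ((t : ℤ) - 1)

noncomputable def complexity : ℕ∞ :=
  sInf {c : ℕ∞ | ∃ t : ℕ, c = t ∧ HasComplexityLE A M t}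

def HasProjDimLE (t : ℕ) : Prop :=
  ∃ R : MinFreeRes A M, ∀ i, t < i → R.b i = 0

noncomputable def projDim : ℕ∞ :=
  sInf {c : ℕ∞ | ∃ t : ℕ, c = t ∧ HasProjDimLE A M t}

def HasFiniteProjDim : Prop :=
  ∃ t : ℕ, HasProjDimLE A M t

def IsSyzygyOf (S : Type u) [AddCommGroup S] [Module A S] : ℕ → Prop
  | 0 => Nonempty (S ≃ₗ[A] M)
  | 1 => ∃ R : MinFreeRes A M, Nonempty (S ≃ₗ[A] (LinearMap.ker R.aug))
  | (n + 2) => ∃ R : MinFreeRes A M, Nonempty (S ≃ₗ[A] (LinearMap.ker (R.d n)))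

variable {A M} in
def IsSES {K S : Type u} [AddCommGroup K] [Module A K] [AddCommGroup S] [Module A S]
    (f : M →ₗ[A] K) (g : K →ₗ[A] S) : Prop :=
  Function.Injective f ∧ Function.Exact f g ∧ Function.Surjective g

noncomputable def extModule (n : ℕ) (N : Type u) [AddCommGroup N] [Module A N] :
    ModuleCat A :=
  ((_root_.Ext A (ModuleCat.{u} A) n).obj (op (ModuleCat.of A M))).obj (ModuleCat.of A N)

def extVanish (n : ℕ) (N : Type u) [AddCommGroup N] [Module A N] : Prop :=
  Subsingleton (extModule A M n N)

/-- The `n`-th Tor module `Tor^A_n(M, N)`. -/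
noncomputable def torModule (n : ℕ) (N : Type u) [AddCommGroup N] [Module A N] :
    ModuleCat A :=
  ((Tor (ModuleCat.{u} A) n).obj (ModuleCat.of A M)).obj (ModuleCat.of A N)

/-- The vanishing `Tor^A_n(M, N) = 0`. -/
def torVanish (n : ℕ) (N : Type u) [AddCommGroup N] [Module A N] : Prop :=
  Subsingleton (torModule A M n N)

noncomputable def depth : ℕ∞ :=
  sInf {c : ℕ∞ | ∃ i : ℕ, c = i ∧ ¬ extVanish A (ResidueField A) i M}

variable {A}

/-- The category of modules of *free reducible complexity* over the local ring `A`.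
It is defined inductively: every finitely generated module of finite projective
dimension has free reducible complexity, and a finitely generated module `M` of finite
positive complexity has free reducible complexity provided there is a short exact
sequence `0 → M → K → Ω^n_A(M) → 0` (necessarily induced by a cohomology element
`η ∈ Ext^{n+1}_A(M,M)`) where `K` is a finitely generated module of free reducible
complexity with `cx K = cx M - 1`. -/
inductive HasFreeRedCxCat : ModuleCat.{u} A → Prop
  | of_finite_projDim (M : ModuleCat.{u} A) (hfg : Module.Finite A M)
      (h : HasFiniteProjDim A M) : HasFreeRedCxCat M
  | step (M K S : ModuleCat.{u} A) (n : ℕ)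
      (hfg : Module.Finite A M) (hKfg : Module.Finite A K)
      (hpos : 0 < complexity A M) (hfin : complexity A M ≠ ⊤)
      (hsyz : IsSyzygyOf A M S n)
      (f : M →ₗ[A] K) (g : K →ₗ[A] S) (hses : IsSES f g)
      (hcx : complexity A K = complexity A M - 1)
      (hK : HasFreeRedCxCat K) : HasFreeRedCxCat M

/-- The category of modules of *reducible complexity* over the local ring `A`: as for
free reducible complexity, but where in addition the reductions are required to
preserve depth. -/
inductive HasRedCxCat : ModuleCat.{u} A → Prop
  | of_finite_projDim (M : ModuleCat.{u} A) (hfg : Module.Finite A M)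
      (h : HasFiniteProjDim A M) : HasRedCxCat M
  | step (M K S : ModuleCat.{u} A) (n : ℕ)
      (hfg : Module.Finite A M) (hKfg : Module.Finite A K)
      (hpos : 0 < complexity A M) (hfin : complexity A M ≠ ⊤)
      (hsyz : IsSyzygyOf A M S n)
      (f : M →ₗ[A] K) (g : K →ₗ[A] S) (hses : IsSES f g)
      (hcx : complexity A K = complexity A M - 1)
      (hdepth : depth A K = depth A M)
      (hK : HasRedCxCat K) : HasRedCxCat M

variable (A)

/-- `M` has free reducible complexity. -/
def HasFreeRedCx (M : Type u) [AddCommGroup M] [Module A M] : Prop :=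
  HasFreeRedCxCat (ModuleCat.of A M)

/-- `M` has reducible complexity. -/
def HasRedCx (M : Type u) [AddCommGroup M] [Module A M] : Prop :=
  HasRedCxCat (ModuleCat.of A M)

/-- A Noetherian local ring is Gorenstein if it has finite injective dimension over
itself; by Bass' characterization, this is equivalent to the vanishing of
`Ext^i_A(k, A)` for all sufficiently large `i`. -/
def IsGorenstein : Prop :=
  ∃ n : ℕ, ∀ i : ℕ, n < i → extVanish A (ResidueField A) i A

end ComplexityTest

open ComplexityTest


namespace ComplexityTest



section helpers

set_option linter.unusedSectionVars false

variable {A : Type u} [CommRing A] [IsLocalRing A]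

/-- The tail of a minimal free resolution resolves the first syzygy. -/
noncomputable def MinFreeRes.shift {M : Type u} [AddCommGroup M] [Module A M]
    (R : MinFreeRes A M) : MinFreeRes A (LinearMap.ker R.aug) where
  b n := R.b (n + 1)
  d n := R.d (n + 1)
  aug := (R.d 0).codRestrict _ (fun x => by
    rw [LinearMap.mem_ker]; exact (R.exact_zero _).2 ⟨x, rfl⟩)
  aug_surjective := by
    rintro ⟨y, hy⟩
    obtain ⟨x, rfl⟩ := (R.exact_zero y).1 hy
    exact ⟨x, rfl⟩
  exact_zero := by
    intro y
    rw [← R.exact_succ 0 y]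
    exact Subtype.ext_iff
  exact_succ n := R.exact_succ (n + 1)
  minimal n := R.minimal (n + 1)

theorem ker_shift_aug {M : Type u} [AddCommGroup M] [Module A M]
    (R : MinFreeRes A M) : LinearMap.ker R.shift.aug = LinearMap.ker (R.d 0) := by
  ext x
  simp only [LinearMap.mem_ker]
  exact Subtype.ext_iff

theorem IsSyzygyOf.pred {M S : Type u} [AddCommGroup M] [Module A M] [AddCommGroup S] [Module A S]
    {n : ℕ} (h : IsSyzygyOf A M S (n + 1)) :
    ∃ R : MinFreeRes A M, IsSyzygyOf A (LinearMap.ker R.aug) S n := by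
  match n, h with
  | 0, ⟨R, e⟩ => exact ⟨R, e⟩
  | 1, ⟨R, ⟨e⟩⟩ => exact ⟨R, R.shift, ⟨e.trans (LinearEquiv.ofEq _ _ (ker_shift_aug R).symm)⟩⟩
  | n + 2, ⟨R, e⟩ => exact ⟨R, R.shift, e⟩

/-- The short complex `0 → ker aug → F₀ → M → 0`. -/
noncomputable abbrev MinFreeRes.sc {M : Type u} [AddCommGroup M] [Module A M]
    (R : MinFreeRes A M) : ShortComplex (ModuleCat.{u} A) :=
  ShortComplex.mk (X₁ := ModuleCat.of A (LinearMap.ker R.aug))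
    (X₂ := ModuleCat.of A (Fin (R.b 0) → A)) (X₃ := ModuleCat.of A M)
    (ModuleCat.ofHom (LinearMap.ker R.aug).subtype) (ModuleCat.ofHom R.aug) (by
      ext x; exact x.2)

theorem shortExact_of_isSES {M K S : Type u} [AddCommGroup M] [Module A M]
    [AddCommGroup K] [Module A K] [AddCommGroup S] [Module A S]
    (f : M →ₗ[A] K) (g : K →ₗ[A] S) (h : IsSES f g)
    (w : ModuleCat.ofHom f ≫ ModuleCat.ofHom g = 0) :
    (ShortComplex.mk (ModuleCat.ofHom f) (ModuleCat.ofHom g) w).ShortExact where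
  exact := by
    rw [ShortComplex.ShortExact.moduleCat_exact_iff_function_exact]
    exact h.2.1
  mono_f := (ModuleCat.mono_iff_injective _).2 h.1
  epi_g := (ModuleCat.epi_iff_surjective _).2 h.2.2

theorem MinFreeRes.sc_shortExact {M : Type u} [AddCommGroup M] [Module A M]
    (R : MinFreeRes A M) : R.sc.ShortExact :=
  shortExact_of_isSES _ _ ⟨Subtype.val_injective, LinearMap.exact_subtype_ker_map _,
    R.aug_surjective⟩ _

instance {M : Type u} [AddCommGroup M] [Module A M]
    (R : MinFreeRes A M) : Projective R.sc.X₂ := by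
  exact ModuleCat.projective_of_categoryTheory_projective
    (ModuleCat.of A (Fin (R.b 0) → A))

theorem MinFreeRes.residue_comp {M : Type u} [AddCommGroup M] [Module A M]
    (R : MinFreeRes A M) (φ : (Fin (R.b 0) → A) →ₗ[A] ResidueField A)
    (x : Fin (R.b 0) → A) (hx : R.aug x = 0) : φ x = 0 := by
  obtain ⟨y, rfl⟩ := (R.exact_zero x).1 hx
  rw [LinearMap.pi_apply_eq_sum_univ φ]
  refine Finset.sum_eq_zero fun i _ => ?_
  have := R.minimal 0 y i
  rw [← IsLocalRing.residue_eq_zero_iff] at this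
  rw [Algebra.smul_def]
  erw [this]
  exact zero_mul _

/-- The residue field as an object of the module category. -/
noncomputable abbrev kk (A : Type u) [CommRing A] [IsLocalRing A] : ModuleCat.{u} A :=
  ModuleCat.of A (ResidueField A)

theorem MinFreeRes.shift_bijective {M : Type u} [AddCommGroup M] [Module A M]
    (R : MinFreeRes A M) (i j : ℕ) (h : 1 + i = j) :
    Function.Bijective (Abelian.Ext.precompOfLinear R.sc_shortExact.extClass A (kk A) h) := by
  obtain rfl : i + 1 = j := by omega
  constructor
  · rw [← LinearMap.ker_eq_bot, LinearMap.ker_eq_bot']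
    intro x hx
    obtain ⟨y, rfl⟩ := Abelian.Ext.contravariant_sequence_exact₁ R.sc_shortExact (kk A) x h hx
    cases i with
    | succ i => rw [Abelian.Ext.eq_zero_of_projective y, Abelian.Ext.comp_zero]
    | zero =>
      obtain ⟨φ, rfl⟩ := Abelian.Ext.homEquiv₀.symm.surjective y
      have : R.sc.f ≫ φ = 0 := by
        ext x
        exact R.residue_comp φ.hom _ x.2
      simp [this]
  · intro x
    obtain ⟨y, hy⟩ := Abelian.Ext.contravariant_sequence_exact₃ R.sc_shortExact (kk A) x
      (Abelian.Ext.eq_zero_of_projective _) h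
    exact ⟨y, hy⟩

theorem length_residue : Module.length A (ResidueField A) = 1 := by
  rw [Module.length_eq_of_surjective (R := ResidueField A) (S := A)
    (IsLocalRing.residue_surjective), Module.length_eq_one]

theorem MinFreeRes.length_ext {M : Type u} [AddCommGroup M] [Module A M]
    (R : MinFreeRes A M) (i : ℕ) :
    Module.length A (Abelian.Ext (ModuleCat.of A M) (kk A) i) = R.b i := by
  induction i generalizing M with
  | succ i ih =>
    rw [← (LinearEquiv.ofBijective _ (R.shift_bijective i (i + 1) (by omega))).length_eq]
    exact ih R.shift
  | zero =>
    rw [(Abelian.Ext.linearEquiv₀ (R := A)).length_eq, (ModuleCat.homLinearEquiv (S := A)).length_eq]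
    have e : Function.Bijective
        (LinearMap.lcomp A (ResidueField A) R.aug) := by
      constructor
      · intro f g hfg
        ext x
        obtain ⟨y, rfl⟩ := R.aug_surjective x
        exact LinearMap.congr_fun hfg y
      · intro φ
        let e := LinearMap.quotKerEquivOfSurjective R.aug R.aug_surjective
        refine ⟨((LinearMap.ker R.aug).liftQ φ (fun x hx => R.residue_comp φ x hx)).comp
          e.symm.toLinearMap, ?_⟩
        refine LinearMap.ext fun x => ?_
        have h1 : e.symm (R.aug x) = (LinearMap.ker R.aug).mkQ x := by
          rw [LinearEquiv.symm_apply_eq]; rfl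
        change (LinearMap.ker R.aug).liftQ φ (fun x hx => R.residue_comp φ x hx) (e.symm (R.aug x)) = φ x
        rw [h1]; rfl
    rw [(LinearEquiv.ofBijective _ e).length_eq,
      ← ((Pi.basisFun A (Fin (R.b 0))).constr A (M' := ResidueField A)).length_eq,
      Module.length_pi, length_residue]
    simp

theorem extVanish_iff (M N : Type u) [AddCommGroup M] [Module A M] [AddCommGroup N] [Module A N]
    (i : ℕ) : extVanish A M i N ↔ Subsingleton (Abelian.Ext (ModuleCat.of A M) (ModuleCat.of A N) i) := by
  let P := projectiveResolution (ModuleCat.of A M)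
  unfold extVanish extModule
  rw [← ModuleCat.isZero_iff_subsingleton]
  rw [(P.isoExt (R := A) i (ModuleCat.of A N)).isZero_iff,
    ← HomologicalComplex.exactAt_iff_isZero_homology]
  cases i with
  | zero =>
    rw [HomologicalComplex.exactAt_iff' _ 0 0 1 (by simp) (by simp),
      ShortComplex.moduleCat_exact_iff]
    let π : P.complex.X 0 ⟶ ModuleCat.of A M := P.π.f 0
    have hπ : P.complex.d 1 0 ≫ π = 0 := P.complex_d_comp_π_f_zero
    have hepi : Epi π := inferInstanceAs (Epi (P.π.f 0))
    have hex : (ShortComplex.mk (P.complex.d 1 0) π hπ).Exact := P.exact₀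
    have hex' : Epi (ShortComplex.mk (P.complex.d 1 0) π hπ).g := hepi
    constructor
    · intro h
      refine subsingleton_of_forall_eq 0 fun x => ?_
      obtain ⟨φ, rfl⟩ := Abelian.Ext.homEquiv₀.symm.surjective x
      obtain ⟨y, hy⟩ := h (π ≫ φ)
        (show P.complex.d 1 0 ≫ π ≫ φ = 0 by
          rw [← Category.assoc, hπ, Limits.zero_comp])
      let y' : P.complex.X 0 ⟶ ModuleCat.of A N := y
      have hy' : P.complex.d 0 0 ≫ y' = π ≫ φ := hy
      rw [P.complex.shape _ _ (by simp), Limits.zero_comp] at hy'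
      have : φ = 0 := by
        rw [← cancel_epi π, ← hy', Limits.comp_zero]
      simp [this]
    · intro h f hf
      let f' : P.complex.X 0 ⟶ ModuleCat.of A N := f
      have hf' : P.complex.d 1 0 ≫ f' = 0 := hf
      have h2 : π ≫ hex.desc f' hf' = f' := hex.g_desc f' hf'
      have h3 : hex.desc f' hf' = 0 :=
        Abelian.Ext.homEquiv₀.symm.injective (h.elim _ _)
      rw [h3, Limits.comp_zero] at h2
      refine ⟨0, ?_⟩
      rw [map_zero]
      exact h2
  | succ i =>
    rw [HomologicalComplex.exactAt_iff' _ i (i+1) (i+2) (by simp) (by simp),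
      ShortComplex.moduleCat_exact_iff]
    constructor
    · intro h
      refine subsingleton_of_forall_eq 0 fun x => ?_
      obtain ⟨f, hf, rfl⟩ := P.extMk_surjective x (i+2) rfl
      rw [P.extMk_eq_zero_iff _ _ _ _ i rfl]
      exact h f hf
    · intro h f hf
      exact (P.extMk_eq_zero_iff f _ rfl hf i rfl).1 (Subsingleton.elim _ _)


theorem exists_theta {M S : Type u} [AddCommGroup M] [Module A M] [AddCommGroup S] [Module A S]
    (n : ℕ) (h : IsSyzygyOf A M S n) :
    ∃ θ : Abelian.Ext (ModuleCat.of A M) (ModuleCat.of A S) n,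
      ∀ (j m : ℕ) (hm : n + j = m) (x : Abelian.Ext (ModuleCat.of A S) (kk A) j),
        θ.comp x hm = 0 → x = 0 := by
  induction n generalizing M with
  | zero =>
    obtain ⟨e⟩ := h
    refine ⟨Abelian.Ext.mk₀ (ModuleCat.ofHom e.symm.toLinearMap), ?_⟩
    intro j m hm x hx
    obtain rfl : j = m := by omega
    have h1 : (Abelian.Ext.mk₀ (ModuleCat.ofHom e.toLinearMap)).comp
        ((Abelian.Ext.mk₀ (ModuleCat.ofHom e.symm.toLinearMap)).comp x hm) (zero_add j) = x := by
      rw [Abelian.Ext.mk₀_comp_mk₀_assoc]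
      have : ModuleCat.ofHom e.toLinearMap ≫ ModuleCat.ofHom e.symm.toLinearMap = 𝟙 _ := by
        ext x; simp
      rw [this]
      simp
    rw [hx, Abelian.Ext.comp_zero] at h1
    exact h1.symm
  | succ n ih =>
    obtain ⟨R, hR⟩ := h.pred
    obtain ⟨θ, hθ⟩ := ih hR
    refine ⟨R.sc_shortExact.extClass.comp θ (by omega), ?_⟩
    intro j m hm x hx
    refine hθ j (n + j) rfl x ?_
    rw [Abelian.Ext.comp_assoc (a₁₂ := n + 1) (a₂₃ := n + j) _ _ _ (by omega) rfl (by omega)] at hx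
    exact (R.shift_bijective (n + j) m (by omega)).1 (hx.trans (map_zero _).symm)

theorem length_comap_le {V W : Type*} [AddCommGroup V] [Module A V] [AddCommGroup W] [Module A W]
    (p : V →ₗ[A] W) (N : Submodule A W) :
    Module.length A (N.comap p) ≤ Module.length A (LinearMap.ker p) + Module.length A N := by
  let q : N.comap p →ₗ[A] N := p.restrict (fun x hx => hx)
  rw [Module.length_eq_add_of_exact (LinearMap.ker q).subtype q.rangeRestrict
    (Submodule.subtype_injective _) q.surjective_rangeRestrict (by
      intro x
      simp [Subtype.ext_iff, q])]
  refine add_le_add ?_ (Module.length_le_of_injective _ (Submodule.subtype_injective _))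
  refine Module.length_le_of_injective
    (((N.comap p).subtype.restrict (p := LinearMap.ker q) (q := LinearMap.ker p)
      (fun x hx => congrArg Subtype.val hx))) ?_
  rintro ⟨⟨x, _⟩, _⟩ ⟨⟨y, _⟩, _⟩ h
  have : x = y := congrArg Subtype.val h
  subst this
  rfl

/-- The key inequality between Betti numbers. -/
theorem betti_le {M K S : Type u} [AddCommGroup M] [Module A M]
    [AddCommGroup K] [Module A K] [AddCommGroup S] [Module A S] (n : ℕ)
    (hsyz : IsSyzygyOf A M S n) (f : M →ₗ[A] K) (g : K →ₗ[A] S) (hses : IsSES f g)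
    (RM : MinFreeRes A M) (RK : MinFreeRes A K) (N : ℕ)
    (hN : ∀ i, N ≤ i → extVanish A M i M) (i : ℕ) :
    RM.b i ≤ ∑ j ∈ Finset.range N, RK.b (i + j * (n + 1)) := by
  obtain ⟨θ, hθ⟩ := exists_theta n hsyz
  have w : ModuleCat.ofHom f ≫ ModuleCat.ofHom g = 0 := by
    ext x; exact (hses.2.1 _).2 ⟨x, rfl⟩
  have hS := shortExact_of_isSES f g hses w
  let ζ : Abelian.Ext (ModuleCat.of A M) (ModuleCat.of A M) (n + 1) := θ.comp hS.extClass rfl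
  have hker : ∀ i m (hm : (n + 1) + i = m),
      Module.length A (LinearMap.ker (Abelian.Ext.precompOfLinear ζ A (kk A) hm)) ≤ RK.b i := by
    intro i m hm
    rw [← RK.length_ext i]
    have : LinearMap.ker (Abelian.Ext.precompOfLinear ζ A (kk A) hm) ≤ LinearMap.range
        (Abelian.Ext.precompOfLinear (Abelian.Ext.mk₀ (ModuleCat.ofHom f)) A (kk A)
          (zero_add i)) := by
      intro x hx
      have hx : (θ.comp hS.extClass rfl).comp x hm = 0 := hx
      rw [Abelian.Ext.comp_assoc (a₂₃ := 1 + i) _ _ _ rfl rfl (by omega)] at hx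
      obtain ⟨y, hy⟩ := Abelian.Ext.contravariant_sequence_exact₁ hS (kk A) x rfl
        (hθ _ _ _ _ hx)
      exact ⟨y, hy⟩
    refine (Module.length_le_of_injective _ (Submodule.inclusion_injective this)).trans ?_
    exact Module.length_le_of_surjective _ (LinearMap.surjective_rangeRestrict
      (Abelian.Ext.precompOfLinear (Abelian.Ext.mk₀ (ModuleCat.ofHom f)) A (kk A) (zero_add i)))
  have key : ∀ s : ℕ, ∃ z : Abelian.Ext (ModuleCat.of A M) (ModuleCat.of A M) (s * (n + 1)),
      ∀ i m (hm : s * (n + 1) + i = m),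
        Module.length A (LinearMap.ker (Abelian.Ext.precompOfLinear z A (kk A) hm)) ≤
          ((∑ j ∈ Finset.range s, RK.b (i + j * (n + 1)) : ℕ) : ℕ∞) := by
    intro s
    induction s with
    | zero =>
      have h0 : 0 * (n + 1) = 0 := zero_mul _
      rw [h0]
      refine ⟨Abelian.Ext.mk₀ (𝟙 _), fun i m hm => ?_⟩
      obtain rfl : i = m := by omega
      have : LinearMap.ker (Abelian.Ext.precompOfLinear
          (Abelian.Ext.mk₀ (𝟙 (ModuleCat.of A M))) A (kk A) hm) = ⊥ := by
        rw [LinearMap.ker_eq_bot']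
        intro x hx
        have hx : (Abelian.Ext.mk₀ (𝟙 (ModuleCat.of A M))).comp x hm = 0 := hx
        simpa using hx
      rw [this]
      simp
    | succ s ih =>
      obtain ⟨z, hz⟩ := ih
      refine ⟨z.comp ζ (by ring), fun i m hm => ?_⟩
      have hm' : s * (n + 1) + ((n + 1) + i) = m := by rw [← hm]; ring
      have : LinearMap.ker (Abelian.Ext.precompOfLinear (z.comp ζ (by ring)) A (kk A) hm) =
          (LinearMap.ker (Abelian.Ext.precompOfLinear z A (kk A) hm')).comap
            (Abelian.Ext.precompOfLinear ζ A (kk A) rfl) := by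
        ext x
        change (z.comp ζ _).comp x hm = 0 ↔ z.comp (ζ.comp x rfl) hm' = 0
        rw [Abelian.Ext.comp_assoc _ _ _ _ _ (by rw [← hm]; ring)]
      rw [this]
      refine (length_comap_le _ _).trans ?_
      refine (add_le_add (hker i _ rfl) (hz _ _ hm')).trans ?_
      rw [Finset.sum_range_succ']
      have e : ∀ j, n + 1 + i + j * (n + 1) = i + (j + 1) * (n + 1) := fun j => by ring
      simp only [e]
      rw [zero_mul, add_zero, add_comm]
      push_cast
      rfl
  obtain ⟨z, hz⟩ := key N
  have hz0 : z = 0 := by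
    have := (extVanish_iff M M _).1 (hN (N * (n + 1)) (Nat.le_mul_of_pos_right _ (by omega)))
    exact Subsingleton.elim _ _
  have := hz i _ rfl
  have htop : LinearMap.ker (Abelian.Ext.precompOfLinear z A (kk A) (rfl : N * (n+1) + i = _)) = ⊤ := by
    rw [hz0]
    refine eq_top_iff.2 fun x _ => ?_
    rw [LinearMap.mem_ker]
    exact Abelian.Ext.zero_comp _ _ _ _ rfl
  rw [htop, Module.length_top, RM.length_ext] at this
  exact_mod_cast this

theorem zpow_bound (c n j s : ℕ) (hn : 1 ≤ n) (hj : j ≤ s) :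
    ((n + j : ℕ) : ℝ) ^ ((c : ℤ) - 1) ≤ (1 + s : ℝ) ^ c * (n : ℝ) ^ ((c : ℤ) - 1) := by
  have hn' : (1 : ℝ) ≤ n := by exact_mod_cast hn
  have hj' : (j : ℝ) ≤ s := by exact_mod_cast hj
  have hj0 : (0 : ℝ) ≤ j := Nat.cast_nonneg _
  cases c with
  | zero =>
    simp only [Nat.cast_zero, zero_sub, zpow_neg, zpow_one, pow_zero, one_mul]
    apply inv_anti₀ (by linarith)
    push_cast; linarith
  | succ c =>
    have : ((c + 1 : ℕ) : ℤ) - 1 = (c : ℤ) := by push_cast; ring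
    rw [this, zpow_natCast, zpow_natCast]
    calc ((n + j : ℕ) : ℝ) ^ c ≤ ((1 + s) * n) ^ c := by
          apply pow_le_pow_left₀ (by positivity)
          push_cast
          nlinarith
      _ = (1 + s : ℝ) ^ c * n ^ c := mul_pow _ _ _
      _ ≤ (1 + s : ℝ) ^ (c + 1) * n ^ c := by
          apply mul_le_mul_of_nonneg_right _ (by positivity)
          apply pow_le_pow_right₀ (by linarith) (by omega)

theorem hasComplexityLE_of_sum {M K : Type u} [AddCommGroup M] [Module A M]
    [AddCommGroup K] [Module A K] (RM : MinFreeRes A M) (RK : MinFreeRes A K) (N t c : ℕ)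
    (h : ∀ i, RM.b i ≤ ∑ j ∈ Finset.range N, RK.b (i + j * t)) (a : ℝ)
    (ha : ∀ᶠ n : ℕ in atTop, (RK.b n : ℝ) ≤ a * (n : ℝ) ^ ((c : ℤ) - 1)) :
    HasComplexityLE A M c := by
  refine ⟨RM, N * (|a| * (1 + (N * t : ℕ) : ℝ) ^ c), ?_⟩
  obtain ⟨n0, hn0⟩ := eventually_atTop.1 ha
  filter_upwards [eventually_ge_atTop (max n0 1)] with n hn
  have h1 : n0 ≤ n := le_trans (le_max_left _ _) hn
  have h2 : 1 ≤ n := le_trans (le_max_right _ _) hn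
  calc (RM.b n : ℝ) ≤ ∑ j ∈ Finset.range N, (RK.b (n + j * t) : ℝ) := by exact_mod_cast h n
    _ ≤ ∑ j ∈ Finset.range N, |a| * ((1 + (N * t : ℕ) : ℝ) ^ c * (n : ℝ) ^ ((c : ℤ) - 1)) := by
        refine Finset.sum_le_sum fun j hj => ?_
        refine (hn0 _ (by omega)).trans ?_
        refine mul_le_mul (le_abs_self a) ?_ (by positivity) (abs_nonneg a)
        exact zpow_bound c n (j * t) (N * t) h2
          (Nat.mul_le_mul_right _ (Finset.mem_range.1 hj).le)
    _ = _ := by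
        rw [Finset.sum_const, Finset.card_range, nsmul_eq_mul]; ring

theorem exists_of_complexity_ne_top {M : Type u} [AddCommGroup M] [Module A M]
    (h : complexity A M ≠ ⊤) : ∃ c : ℕ, complexity A M = c ∧ HasComplexityLE A M c := by
  have hne : {c : ℕ∞ | ∃ t : ℕ, c = t ∧ HasComplexityLE A M t}.Nonempty := by
    by_contra hc
    rw [Set.not_nonempty_iff_eq_empty] at hc
    exact h (by rw [complexity, hc, sInf_empty])
  exact csInf_mem hne

theorem step_nonvanish {M K S : Type u} [AddCommGroup M] [Module A M]
    [AddCommGroup K] [Module A K] [AddCommGroup S] [Module A S] (n : ℕ)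
    (hpos : 0 < complexity A M) (hfin : complexity A M ≠ ⊤)
    (hsyz : IsSyzygyOf A M S n) (f : M →ₗ[A] K) (g : K →ₗ[A] S) (hses : IsSES f g)
    (hcx : complexity A K = complexity A M - 1) (N : ℕ) :
    ∃ i : ℕ, N ≤ i ∧ ¬ extVanish A M i M := by
  by_contra hcon
  push Not at hcon
  obtain ⟨cM, hcM, RM, -⟩ := exists_of_complexity_ne_top hfin
  obtain ⟨cK, hcK, RK, a, ha⟩ := exists_of_complexity_ne_top (A := A) (M := K) (by
    rw [hcx, hcM]; exact_mod_cast ENat.natCast_ne_top (cM - 1))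
  have hle : complexity A M ≤ cK := sInf_le ⟨cK, rfl, hasComplexityLE_of_sum RM RK N (n + 1) cK
    (betti_le n hsyz f g hses RM RK N hcon) a ha⟩
  rw [← hcK, hcx, hcM] at hle
  rw [hcM] at hpos
  have h1 : cM ≤ cM - 1 := by exact_mod_cast hle
  have h2 : 0 < cM := by exact_mod_cast hpos
  omega

theorem hasProjDimLT {M : Type u} [AddCommGroup M] [Module A M] (R : MinFreeRes A M) (d : ℕ)
    (h : R.b d = 0) : HasProjectiveDimensionLT (ModuleCat.of A M) d := by
  induction d generalizing M with
  | zero =>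
    rw [hasProjectiveDimensionLT_zero_iff_isZero, ModuleCat.isZero_iff_subsingleton]
    have : Subsingleton (Fin (R.b 0) → A) := by rw [h]; infer_instance
    exact R.aug_surjective.subsingleton
  | succ d ih =>
    exact R.sc_shortExact.hasProjectiveDimensionLT_X₃ d (ih R.shift h)
      (hasProjectiveDimensionLT_of_ge _ 1 _ (by omega))

theorem b_eq_zero_of_subsingleton {M : Type u} [AddCommGroup M] [Module A M]
    (R : MinFreeRes A M) [Subsingleton M] (i : ℕ) : R.b i = 0 := by
  have h := R.length_ext i
  have hz : HasProjectiveDimensionLT (ModuleCat.of A M) 0 := by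
    rw [hasProjectiveDimensionLT_zero_iff_isZero, ModuleCat.isZero_iff_subsingleton]
    exact ‹Subsingleton M›
  have := HasProjectiveDimensionLT.subsingleton (ModuleCat.of A M) 0 i (by omega) (kk A)
  rw [Module.length_eq_zero] at h
  exact_mod_cast h.symm

theorem exists_surj {M : Type u} [AddCommGroup M] [Module A M]
    (R : MinFreeRes A M) [Nontrivial M] :
    ∃ φ : M →ₗ[A] ResidueField A, Function.Surjective φ := by
  have h0 : R.b 0 ≠ 0 := by
    intro h
    have : Subsingleton (Fin (R.b 0) → A) := by rw [h]; infer_instance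
    exact not_subsingleton M R.aug_surjective.subsingleton
  have hl : Nontrivial (Abelian.Ext (ModuleCat.of A M) (kk A) 0) := by
    rw [← Module.length_pos_iff (R := A), R.length_ext]
    exact_mod_cast Nat.pos_of_ne_zero h0
  obtain ⟨x, hx⟩ := exists_ne (0 : Abelian.Ext (ModuleCat.of A M) (kk A) 0)
  obtain ⟨φ, rfl⟩ := Abelian.Ext.homEquiv₀.symm.surjective x
  have hφ : φ.hom ≠ 0 := by
    intro h
    apply hx
    have : φ = 0 := by ext1; exact h
    simp [this]
  have : IsSimpleModule A (ResidueField A) := Module.length_eq_one_iff.1 length_residue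
  exact ⟨φ.hom, LinearMap.surjective_of_ne_zero hφ⟩

theorem top_nonvanish {M : Type u} [AddCommGroup M] [Module A M]
    (R : MinFreeRes A M) (d : ℕ) (hd : R.b d ≠ 0) (hd' : R.b (d + 1) = 0) :
    ¬ extVanish A M d M := by
  intro hv
  rw [extVanish_iff] at hv
  have : Nontrivial M := by
    by_contra h
    rw [not_nontrivial_iff_subsingleton] at h
    exact hd (b_eq_zero_of_subsingleton R d)
  obtain ⟨φ, hφ⟩ := exists_surj R
  have hS := shortExact_of_isSES (LinearMap.ker φ).subtype φ
    ⟨Subtype.val_injective, LinearMap.exact_subtype_ker_map _, hφ⟩ (by ext x; exact x.2)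
  have hpd := hasProjDimLT R (d + 1) hd'
  have hs : Subsingleton (Abelian.Ext (ModuleCat.of A M) (kk A) d) := by
    refine subsingleton_of_forall_eq 0 fun x => ?_
    obtain ⟨y, hy⟩ := Abelian.Ext.covariant_sequence_exact₃ (ModuleCat.of A M) hS x rfl
      (Abelian.Ext.eq_zero_of_hasProjectiveDimensionLT _ (d + 1) le_rfl)
    rw [← hy, Subsingleton.elim y 0, Abelian.Ext.zero_comp]
  have h := R.length_ext d
  rw [Module.length_eq_zero] at h
  exact hd (by exact_mod_cast h.symm)

theorem finite_case {M : Type u} [AddCommGroup M] [Module A M]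
    (h : HasFiniteProjDim A M) :
    projDim A M = sSup {c : ℕ∞ | ∃ i : ℕ, c = i ∧ ¬ extVanish A M i M} := by
  classical
  have hspec := Nat.find_spec h
  have hmin := fun m => Nat.find_min (m := m) h
  set d := Nat.find h with hdd
  have hpd : projDim A M = d := by
    apply le_antisymm
    · exact sInf_le ⟨d, rfl, hspec⟩
    · refine le_sInf ?_
      rintro _ ⟨t, rfl, ht⟩
      exact_mod_cast Nat.find_min' h ht
  obtain ⟨R, hR⟩ := hspec
  have hlt := hasProjDimLT R (d + 1) (hR _ (by omega))
  rw [hpd]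
  apply le_antisymm
  · rcases Nat.eq_zero_or_pos d with h0 | h0
    · rw [h0]; simp
    · refine le_sSup ⟨d, rfl, top_nonvanish R d ?_ (hR _ (by omega))⟩
      intro hb
      refine hmin (d - 1) (by omega) ⟨R, fun i hi => ?_⟩
      rcases Nat.lt_or_ge d i with h1 | h1
      · exact hR i h1
      · obtain rfl : i = d := by omega
        exact hb
  · refine sSup_le ?_
    rintro _ ⟨i, rfl, hi⟩
    by_contra hc
    have hc : d < i := by simpa using hc
    apply hi
    rw [extVanish_iff]
    exact HasProjectiveDimensionLT.subsingleton _ (d + 1) i hc _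

theorem nonvanish_of_infinite {X : ModuleCat.{u} A} (hX : HasFreeRedCxCat X)
    (h : ¬ HasFiniteProjDim A X) (N : ℕ) : ∃ i : ℕ, N ≤ i ∧ ¬ extVanish A X i X := by
  cases hX with
  | of_finite_projDim _ _ h' => exact absurd h' h
  | step _ K S n hfg hKfg hpos hfin hsyz f g hses hcx hK =>
    exact step_nonvanish n hpos hfin hsyz f g hses hcx N

end helpers

end ComplexityTest

/-- **Proposition 3.1**: if `M` has free reducible complexity over the local ring `A`,
then `pd_A M = sup { i | Ext^i_A(M,M) ≠ 0 }`; in particular, if `M` has infinite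
projective dimension then `Ext^i_A(M,M) ≠ 0` for infinitely many `i`. -/
theorem projDim_eq_sup_ext_nonvanishing
    (A : Type u) [CommRing A] [IsLocalRing A] [IsNoetherianRing A]
    (M : Type u) [AddCommGroup M] [Module A M] [Module.Finite A M]
    (hM : HasFreeRedCx A M) :
    projDim A M = sSup {c : ℕ∞ | ∃ i : ℕ, c = i ∧ ¬ extVanish A M i M} ∧
      (¬ HasFiniteProjDim A M → ∀ n : ℕ, ∃ i : ℕ, n ≤ i ∧ ¬ extVanish A M i M) := by
  have hinf := nonvanish_of_infinite (X := ModuleCat.of A M) hM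
  refine ⟨?_, hinf⟩
  by_cases h : HasFiniteProjDim A M
  · exact finite_case h
  · have h1 : projDim A M = ⊤ := by
      refine sInf_eq_top.2 ?_
      rintro _ ⟨t, rfl, ht⟩
      exact absurd ⟨t, ht⟩ h
    rw [h1]
    symm
    refine ENat.eq_top_iff_forall_ge.2 fun n => ?_
    obtain ⟨i, hi, hv⟩ := hinf h n
    exact le_trans (by exact_mod_cast hi) (le_sSup ⟨i, rfl, hv⟩)
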